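/- Suppose λ_0, …, λ_{ns−1} are pairwise distinct and satisfy the local constraints. Then for any c ≥ 1 pairwise distinct indices a_0, …, a_{c−1} ∈ {0,…,n/(s+1)−1} and any nonempty subsets B_0, …, B_{c−1} ⊆ {0,…,s} with |B_0| + |B_1| + … + |B_{c−1}| = t ≤ r, the ℓt × ℓt matrix [A_{a_0,B_0}^(t) | A_{a_1,B_1}^(t) | … | A_{a_{c−1},B_{c−1}}^(t)] has nonzero determinant. -/

import Mathlib

open Matrix

/-- The `u`-th digit of `i` in base `s`. -/
def digit (s i u : ℕ) : ℕ := i / s ^ u % s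

open scoped Classical in
/-- The `z`-th entry of the `(i,j)` block (a length-`t` column vector, `0 ≤ z < t`) of the
block matrix `A_{a,b}^{(t)}`; the group size is `g` (`g = s` for the first construction and
`g = s + 1` for the second), so the relevant `λ`-index is `a·s·g + b·s + j_a`. -/
noncomputable def Aent {F : Type*} [Field F] (lam : ℕ → F) (s g a b i j z : ℕ) : F :=
  if i = j then lam (a * s * g + b * s + digit s j a) ^ z
  else if digit s i a = b ∧ digit s j a ≠ b ∧ (∀ u, u ≠ a → digit s i u = digit s j u) then
    -(lam (a * s * g + b * s + digit s j a) ^ z)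
  else 0

/-- `A_{a,b}^{(t)}` as an `ℓt × ℓ` matrix; row `ρ` encodes block row `ρ / t` and
inner row `ρ % t`. -/
noncomputable def Amat {F : Type*} [Field F] (lam : ℕ → F) (s g ℓ a b t : ℕ) :
    Matrix (Fin (ℓ * t)) (Fin ℓ) F :=
  Matrix.of fun ρ j => Aent lam s g a b ((ρ : ℕ) / t) (j : ℕ) ((ρ : ℕ) % t)

/-- The `m`-th smallest element of the finite set `B ⊆ ℕ` (junk value `0` if `m ≥ |B|`). -/
def enum (B : Finset ℕ) (m : ℕ) : ℕ := (B.sort (· ≤ ·)).getD m 0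

/-- `A_{a,B}^{(t)} = [A_{a,b₁}^{(t)} | ⋯ | A_{a,b_v}^{(t)}]` as an `ℓt × ℓ|B|` matrix:
row `ρ` encodes block row `ρ / t` and inner row `ρ % t`; column `κ` selects the
`κ / ℓ`-th member of `B` and inner column `κ % ℓ`. -/
noncomputable def AmatB {F : Type*} [Field F] (lam : ℕ → F) (s g ℓ a t : ℕ) (B : Finset ℕ) :
    Matrix (Fin (ℓ * t)) (Fin (ℓ * B.card)) F :=
  Matrix.of fun ρ κ =>
    Aent lam s g a (enum B ((κ : ℕ) / ℓ)) ((ρ : ℕ) / t) ((κ : ℕ) % ℓ) ((ρ : ℕ) % t)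

/-- The local (in-group) constraints: every square matrix `A_{a,B}` (for a group index
`a < groups` and a nonempty `B ⊆ {0, …, g-1}`) is invertible. -/
def LocalConstraints {F : Type*} [Field F] (lam : ℕ → F) (s g ℓ groups : ℕ) : Prop :=
  ∀ a < groups, ∀ B ⊆ Finset.range g, B.Nonempty → (AmatB lam s g ℓ a B.card B).det ≠ 0

/-- Locate position `κ` within `c` consecutive blocks of sizes `sz 0, sz 1, …`:
returns the block index and the offset within that block. -/
def loc : ℕ → (ℕ → ℕ) → ℕ → ℕ × ℕ
  | 0, _, κ => (0, κ)
  | c + 1, sz, κ =>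
      if κ < sz 0 then (0, κ)
      else
        let p := loc c (fun i => sz (i + 1)) (κ - sz 0)
        (p.1 + 1, p.2)

/-- The horizontal concatenation `[A_{a₀,B₀}^{(t)} | A_{a₁,B₁}^{(t)} | ⋯ | A_{a_{c−1},B_{c−1}}^{(t)}]`
as an `ℓt × ℓt` square matrix (where `t = |B₀| + ⋯ + |B_{c−1}|`). -/
noncomputable def MultiCat {F : Type*} [Field F] (lam : ℕ → F) (s g ℓ t c : ℕ)
    (a : ℕ → ℕ) (B : ℕ → Finset ℕ) : Matrix (Fin (ℓ * t)) (Fin (ℓ * t)) F :=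
  Matrix.of fun ρ κ =>
    let p := loc c (fun m => ℓ * (B m).card) (κ : ℕ)
    Aent lam s g (a p.1) (enum (B p.1) (p.2 / ℓ)) ((ρ : ℕ) / t) (p.2 % ℓ) ((ρ : ℕ) % t)

/-!
Fix the row index of a block and read the corresponding piece of a row vector as the coefficients
of a polynomial of degree less than `t`. Multiplying by a Vandermonde column is then evaluation at
a node, and a nonzero determinant says that these evaluation conditions can be solved with
arbitrary right-hand sides in degree less than `t`.

Without the degree bound this splits over the groups: their node sets are disjoint, so polynomials
equal to `1` on the nodes of one group and to `0` on the others glue the local solutions. To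
bring the degree down, let `v a` be the number of block columns of the group `a`. The local
constraints at `a` say that each row `X ^ v a • e_y` can be corrected in degree less than `v a` to a
row that the kernels of group `a` annihilate. These rows form a monic matrix polynomial of
degree `v a`. Since group `a` acts only on the `a`-th letter of a word, the tensor product of these
matrices over all `a` is annihilated by every block column; it is monic of degree `∑ a, v a = t`,
and division by it leaves a solution of degree less than `t`.
-/

section MonicRow

open Polynomial

variable {R J : Type*} [DecidableEq J]

/-- `r` has the shape of the `i`-th row of a monic matrix polynomial of degree `t`: its leading
part is `X ^ t` in position `i`, and all its other terms have degree less than `t`. -/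
def IsMonicRow [Semiring R] (r : J → R[X]) (i : J) (t : ℕ) : Prop :=
  ∀ j, (r j).natDegree ≤ t ∧ (r j).coeff t = if j = i then 1 else 0

theorem coeff_prod_sum_of_natDegree_le [CommSemiring R] {ι : Type*} (S : Finset ι)
    {p : ι → R[X]} {v : ι → ℕ} (hp : ∀ a ∈ S, (p a).natDegree ≤ v a) :
    (∏ a ∈ S, p a).coeff (∑ a ∈ S, v a) = ∏ a ∈ S, (p a).coeff (v a) := by
  classical
  induction S using Finset.induction_on with
  | empty => simp
  | insert a S ha ih =>
    have hS : ∀ a' ∈ S, (p a').natDegree ≤ v a' := fun a' ha' =>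
      hp a' (Finset.mem_insert_of_mem ha')
    rw [Finset.prod_insert ha, Finset.sum_insert ha, Finset.prod_insert ha, ← ih hS]
    exact coeff_mul_add_eq_of_natDegree_le (hp a (Finset.mem_insert_self a S))
      ((natDegree_prod_le S p).trans (Finset.sum_le_sum hS))

theorem IsMonicRow.prod [CommSemiring R] {ι κ : Type*} [Fintype ι] [DecidableEq κ]
    [DecidableEq (ι → κ)] {P : ι → κ → R[X]} {i : ι → κ} {v : ι → ℕ}
    (hP : ∀ a, IsMonicRow (P a) (i a) (v a)) :
    IsMonicRow (fun j : ι → κ => ∏ a, P a (j a)) i (∑ a, v a) := by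
  intro j
  refine ⟨(natDegree_prod_le _ _).trans (Finset.sum_le_sum fun a _ => (hP a (j a)).1), ?_⟩
  rw [coeff_prod_sum_of_natDegree_le _ fun a _ => (hP a (j a)).1,
    Finset.prod_congr rfl fun a _ => (hP a (j a)).2, Finset.prod_ite_zero]
  simp [funext_iff]

variable [CommRing R]

theorem IsMonicRow.sub_sum_mem_degreeLT [Fintype J] {r : J → J → R[X]} {t D : ℕ}
    (hr : ∀ i, IsMonicRow (r i) i t) {f : J → R[X]} (hf : ∀ j, f j ∈ degreeLT R (t + D + 1))
    (j : J) :
    (f - ∑ i, (C ((f i).coeff (t + D)) * X ^ D) • r i) j ∈ degreeLT R (t + D) := by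
  simp only [mem_degreeLT, degree_lt_iff_coeff_zero] at hf ⊢
  intro m hm
  have hDm : D ≤ m := le_of_add_le_right hm
  simp only [Pi.sub_apply, Finset.sum_apply, Pi.smul_apply, smul_eq_mul, coeff_sub,
    finsetSum_coeff, mul_assoc, coeff_C_mul, coeff_X_pow_mul', if_pos hDm]
  rcases hm.eq_or_lt with rfl | hlt
  · simp [(hr _ j).2]
  · have hr0 : ∀ i, (r i j).coeff (m - D) = 0 := fun i =>
      coeff_eq_zero_of_natDegree_lt ((hr i j).1.trans_lt (by omega))
    simp [hf j m hlt, hr0]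

/-- Division with remainder by a monic matrix polynomial. -/
theorem IsMonicRow.exists_degreeLT_sub_mem [Finite J] {K : Submodule R[X] (J → R[X])}
    {r : J → J → R[X]} {t : ℕ} (hr : ∀ i, IsMonicRow (r i) i t) (hK : ∀ i, r i ∈ K)
    (f : J → R[X]) : ∃ g : J → R[X], (∀ j, g j ∈ degreeLT R t) ∧ f - g ∈ K := by
  have := Fintype.ofFinite J
  obtain ⟨D, hD⟩ : ∃ D, ∀ j, f j ∈ degreeLT R (t + D) := by
    refine ⟨∑ j, ((f j).natDegree + 1), fun j => mem_degreeLT.2 ?_⟩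
    have hj := Finset.single_le_sum (f := fun j => (f j).natDegree + 1)
      (fun _ _ => Nat.zero_le _) (Finset.mem_univ j)
    exact degree_le_natDegree.trans_lt (by exact_mod_cast (by omega))
  induction D generalizing f with
  | zero => exact ⟨f, hD, by simp⟩
  | succ D ih =>
    obtain ⟨g, hg, hfg⟩ := ih _ (sub_sum_mem_degreeLT hr hD)
    refine ⟨g, hg, ?_⟩
    rw [sub_right_comm] at hfg
    exact (K.sub_mem_iff_left (K.sum_mem fun i _ => K.smul_mem _ (hK i))).1 hfg

end MonicRow

section BlockColumn

open Polynomial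

variable {R ι κ : Type*}

/-- The data of a block column `I ⊗ K ⊗ I` with rows and columns indexed by words `ι → κ`, where
the kernel `K` acts on the letter at position `digit`. Its `(z, y)` block is
`weight z y • (1, x, x ^ 2, …)ᵀ` with `x = node y`; the height of the blocks is left open. -/
structure BlockColumn (R ι κ : Type*) where
  digit : ι
  weight : Matrix κ κ R
  node : κ → R

namespace BlockColumn

variable [CommSemiring R] [Fintype κ]

/-- The product of a row vector with the kernel of `A`. The row vector is read as one polynomial
for each letter, so that a Vandermonde column becomes an evaluation. -/
noncomputable def kernelMul (A : BlockColumn R ι κ) : (κ → R[X]) →ₗ[R] (κ → R) where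
  toFun p y := ∑ z, A.weight z y * (p z).eval (A.node y)
  map_add' p q := by ext y; simp [mul_add, Finset.sum_add_distrib]
  map_smul' c p := by ext y; simp [Finset.mul_sum, mul_left_comm]

theorem kernelMul_apply (A : BlockColumn R ι κ) (p : κ → R[X]) (y : κ) :
    A.kernelMul p y = ∑ z, A.weight z y * (p z).eval (A.node y) := rfl

theorem kernelMul_smul (A : BlockColumn R ι κ) (h : R[X]) (p : κ → R[X]) (y : κ) :
    A.kernelMul (h • p) y = h.eval (A.node y) * A.kernelMul p y := by
  simp [kernelMul_apply, Finset.mul_sum, mul_left_comm]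

variable [DecidableEq ι]

/-- The product of a row vector with the block column `A`, the row vector being read as one
polynomial for each word. -/
noncomputable def rowMul (A : BlockColumn R ι κ) : ((ι → κ) → R[X]) →ₗ[R] ((ι → κ) → R) where
  toFun f j := A.kernelMul (fun z => f (Function.update j A.digit z)) (j A.digit)
  map_add' f g := by
    ext j
    exact congrFun (A.kernelMul.map_add (fun z => f (Function.update j A.digit z)) _) _
  map_smul' c f := by
    ext j
    exact congrFun (A.kernelMul.map_smul c fun z => f (Function.update j A.digit z)) _

theorem rowMul_apply (A : BlockColumn R ι κ) (f : (ι → κ) → R[X]) (j : ι → κ) :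
    A.rowMul f j = A.kernelMul (fun z => f (Function.update j A.digit z)) (j A.digit) := rfl

theorem rowMul_smul (A : BlockColumn R ι κ) (h : R[X]) (f : (ι → κ) → R[X]) (j : ι → κ) :
    A.rowMul (h • f) j = h.eval (A.node (j A.digit)) * A.rowMul f j :=
  A.kernelMul_smul h _ _

theorem rowMul_prod [Fintype ι] (A : BlockColumn R ι κ) (P : ι → κ → R[X]) (j : ι → κ) :
    A.rowMul (fun i => ∏ a, P a (i a)) j =
      (∏ a ∈ {A.digit}ᶜ, P a (j a)).eval (A.node (j A.digit)) *
        A.kernelMul (P A.digit) (j A.digit) := by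
  have hslice : (fun z => ∏ a, P a (Function.update j A.digit z a)) =
      (∏ a ∈ {A.digit}ᶜ, P a (j a)) • P A.digit := by
    ext1 z
    rw [Fintype.prod_eq_mul_prod_compl A.digit, Function.update_self, mul_comm, Pi.smul_apply,
      smul_eq_mul]
    congr 1
    refine Finset.prod_congr rfl fun a ha => ?_
    rw [Function.update_of_ne (by simpa using ha)]
  rw [rowMul_apply, hslice, kernelMul_smul]

end BlockColumn

section CommSemiring

variable [CommSemiring R] [Fintype κ] [DecidableEq ι] {C : Type*}

/-- The row vectors of polynomials that are annihilated by every block column of the family. -/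
noncomputable def rowAnnihilator (A : C → BlockColumn R ι κ) : Submodule R[X] ((ι → κ) → R[X]) where
  carrier := {f | ∀ c, (A c).rowMul f = 0}
  add_mem' hf hg c := by rw [map_add, hf c, hg c, add_zero]
  zero_mem' c := map_zero _
  smul_mem' h f hf c := by
    ext j
    rw [BlockColumn.rowMul_smul, hf c, Pi.zero_apply, mul_zero]

/-- The concatenation of the block columns `A c`, truncated to blocks of height `t`, is onto as a
map on row vectors. -/
def InterpolatesBelow (A : C → BlockColumn R ι κ) (t : ℕ) : Prop :=
  ∀ w : C → (ι → κ) → R, ∃ f : (ι → κ) → R[X],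
    (∀ j, f j ∈ degreeLT R t) ∧ ∀ c, (A c).rowMul f = w c

theorem InterpolatesBelow.of_isEmpty [IsEmpty C] (A : C → BlockColumn R ι κ) (t : ℕ) :
    InterpolatesBelow A t :=
  fun _ => ⟨0, fun _ => zero_mem _, isEmptyElim⟩

end CommSemiring

variable [CommRing R] [Fintype κ] [DecidableEq ι] [DecidableEq κ] {C : Type*}

theorem InterpolatesBelow.exists_isMonicRow_kernelMul_eq_zero {A : C → BlockColumn R ι κ} {v : ℕ}
    {a : ι} (hA : InterpolatesBelow A v) (ha : ∀ c, (A c).digit = a) (y : κ) :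
    ∃ P : κ → R[X], IsMonicRow P y v ∧ ∀ c, (A c).kernelMul P = 0 := by
  classical
  -- Correct `X ^ v` at the constant word `y`, then restrict to the words that differ from it
  -- at most in position `a`.
  let word : κ → ι → κ := Function.update (fun _ => y) a
  let lead : (ι → κ) → R[X] := Pi.single (word y) (X ^ v)
  obtain ⟨f, hf, hAf⟩ := hA fun c => -(A c).rowMul lead
  simp only [mem_degreeLT, degree_lt_iff_coeff_zero] at hf
  have hlead : ∀ z, lead (word z) = if z = y then X ^ v else 0 := fun z => by
    simp [lead, Pi.single_apply, word]
  refine ⟨fun z => f (word z) + lead (word z), fun z => ⟨?_, ?_⟩, fun c => ?_⟩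
  · refine natDegree_add_le_of_degree_le
      (natDegree_le_iff_coeff_eq_zero.2 fun m hm => hf _ m hm.le) ?_
    rw [hlead]
    split_ifs
    · exact natDegree_X_pow_le v
    · simp
  · rw [coeff_add, hf _ v le_rfl, hlead]
    split_ifs <;> simp
  · ext z
    have hz : (A c).rowMul (f + lead) (word z) = 0 := by simp [hAf]
    simpa [BlockColumn.rowMul_apply, ha, word] using hz

theorem exists_isMonicRow_mem_rowAnnihilator [Fintype ι] {A : C → BlockColumn R ι κ} {v : ι → ℕ}
    (hA : ∀ a, InterpolatesBelow (fun c : {c // (A c).digit = a} => A c) (v a)) (i : ι → κ) :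
    ∃ r ∈ rowAnnihilator A, IsMonicRow r i (∑ a, v a) := by
  choose P hmonic hP using fun a =>
    (hA a).exists_isMonicRow_kernelMul_eq_zero (fun c => c.2) (i a)
  refine ⟨fun j => ∏ a, P a (j a), fun c => ?_, IsMonicRow.prod hmonic⟩
  ext j
  rw [BlockColumn.rowMul_prod, hP _ ⟨c, rfl⟩, Pi.zero_apply, mul_zero, Pi.zero_apply]

end BlockColumn

section ChineseRemainder

open Polynomial

variable {F ι κ C : Type*} [Field F]

theorem exists_eval_eq_of_factorsThrough {I : Type*} [Finite I] {g φ : I → F}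
    (h : φ.FactorsThrough g) : ∃ p : F[X], ∀ i, p.eval (g i) = φ i := by
  classical
  have := Fintype.ofFinite I
  refine ⟨Lagrange.interpolate (Finset.univ.image g) id (Function.extend g φ 0), fun i => ?_⟩
  rw [← h.extend_apply 0 i]
  exact Lagrange.eval_interpolate_at_node _ Function.injective_id.injOn
    (Finset.mem_image_of_mem g (Finset.mem_univ i))

variable [Fintype κ] [DecidableEq ι] [Finite C] {A : C → BlockColumn F ι κ}

theorem exists_rowMul_eq [Finite ι] {v : ι → ℕ}
    (hnode : ∀ c c' y y', (A c).node y = (A c').node y' → (A c).digit = (A c').digit)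
    (hA : ∀ a, InterpolatesBelow (fun c : {c // (A c).digit = a} => A c) (v a))
    (w : C → (ι → κ) → F) : ∃ f : (ι → κ) → F[X], ∀ c, (A c).rowMul f = w c := by
  have := Fintype.ofFinite ι
  choose f _ hAf using fun a => hA a fun c => w c
  have hind : ∀ a, ∃ H : F[X], ∀ p : C × κ,
      H.eval ((A p.1).node p.2) = if (A p.1).digit = a then 1 else 0 := fun a =>
    exists_eval_eq_of_factorsThrough fun p q hpq => by rw [hnode _ _ _ _ hpq]
  choose H hH using hind
  refine ⟨∑ a, H a • f a, fun c => ?_⟩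
  ext j
  simp only [map_sum, Finset.sum_apply, BlockColumn.rowMul_smul]
  rw [Fintype.sum_eq_single (A c).digit fun a ha => by simp [hH a (c, _), ha.symm],
    hH _ (c, _), if_pos rfl, one_mul]
  exact congrFun (hAf _ ⟨c, rfl⟩) j

theorem InterpolatesBelow.of_fibers [Fintype ι] {v : ι → ℕ}
    (hnode : ∀ c c' y y', (A c).node y = (A c').node y' → (A c).digit = (A c').digit)
    (hA : ∀ a, InterpolatesBelow (fun c : {c // (A c).digit = a} => A c) (v a)) :
    InterpolatesBelow A (∑ a, v a) := by
  classical
  intro w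
  obtain ⟨f, hAf⟩ := exists_rowMul_eq hnode hA w
  choose r hr hmonic using exists_isMonicRow_mem_rowAnnihilator hA
  obtain ⟨g, hg, hfg⟩ := IsMonicRow.exists_degreeLT_sub_mem hmonic hr f
  refine ⟨g, hg, fun c => ?_⟩
  rw [← hAf c, eq_comm, ← sub_eq_zero, ← map_sub]
  exact hfg c

end ChineseRemainder

section Matrices

open Polynomial

variable {R ι κ C : Type*} [CommSemiring R] [Fintype ι] [Fintype κ] [DecidableEq ι] [DecidableEq κ]

/-- The block column `A` as a matrix with blocks of height `t`; the row `(i, z)` is the `z`-th row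
of the block row `i`. -/
def BlockColumn.toMatrix (A : BlockColumn R ι κ) (t : ℕ) : Matrix ((ι → κ) × Fin t) (ι → κ) R :=
  Matrix.of fun p j =>
    if ∀ u, u ≠ A.digit → p.1 u = j u then
      A.weight (p.1 A.digit) (j A.digit) * A.node (j A.digit) ^ (p.2 : ℕ)
    else 0

/-- The horizontal concatenation of the block columns `A c`, with blocks of height `t`. -/
def concatMatrix (A : C → BlockColumn R ι κ) (t : ℕ) :
    Matrix ((ι → κ) × Fin t) (C × (ι → κ)) R :=
  Matrix.of fun p q => (A q.1).toMatrix t p q.2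

theorem BlockColumn.vecMul_toMatrix (A : BlockColumn R ι κ) {t : ℕ} {f : (ι → κ) → R[X]}
    (hf : ∀ j, f j ∈ degreeLT R t) :
    (fun p : (ι → κ) × Fin t => (f p.1).coeff p.2) ᵥ* A.toMatrix t = A.rowMul f := by
  ext j
  simp only [Matrix.vecMul, dotProduct, Fintype.sum_prod_type, rowMul_apply, kernelMul_apply]
  symm
  refine Fintype.sum_of_injective (Function.update j A.digit)
    (Function.update_injective j A.digit) _ _ (fun i hi => ?_) fun z => ?_
  · refine Finset.sum_eq_zero fun z _ => ?_
    rw [toMatrix, Matrix.of_apply, if_neg, mul_zero]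
    exact fun hij => hi ⟨i A.digit, Function.update_eq_iff.2 ⟨rfl, fun u hu => (hij u hu).symm⟩⟩
  · rw [eval_eq_sum_degreeLTEquiv (hf _), Finset.mul_sum]
    refine Finset.sum_congr rfl fun e _ => ?_
    rw [toMatrix, Matrix.of_apply, if_pos fun u hu => Function.update_of_ne hu z j]
    simp only [Function.update_self]
    exact mul_left_comm _ _ _

theorem interpolatesBelow_iff_surjective_vecMul {A : C → BlockColumn R ι κ} {t : ℕ} :
    InterpolatesBelow A t ↔ Function.Surjective (concatMatrix A t).vecMul := by
  have hmul {f : (ι → κ) → R[X]} (hf : ∀ j, f j ∈ degreeLT R t) (q : C × (ι → κ)) :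
      ((fun p : (ι → κ) × Fin t => (f p.1).coeff p.2) ᵥ* concatMatrix A t) q =
        (A q.1).rowMul f q.2 :=
    congrFun ((A q.1).vecMul_toMatrix hf) q.2
  constructor
  · intro hA w
    obtain ⟨f, hf, hAf⟩ := hA fun c j => w (c, j)
    exact ⟨_, funext fun q => (hmul hf q).trans (congrFun (hAf q.1) q.2)⟩
  · intro hA w
    obtain ⟨y, hy⟩ := hA fun q => w q.1 q.2
    let p (j : ι → κ) : degreeLT R t := (degreeLTEquiv R t).symm fun z => y (j, z)
    have hp : (fun q : (ι → κ) × Fin t => (p q.1 : R[X]).coeff q.2) = y :=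
      funext fun q => congrFun ((degreeLTEquiv R t).apply_symm_apply _) q.2
    refine ⟨fun j => p j, fun j => (p j).2, fun c => funext fun j => ?_⟩
    rw [← hmul (fun j => (p j).2) (c, j), hp]
    exact congrFun hy (c, j)

theorem surjective_vecMul_submatrix_equiv {S l m n o : Type*} [NonUnitalNonAssocSemiring S]
    [Fintype l] [Fintype m] (M : Matrix m n S) (e₁ : l ≃ m) (e₂ : o ≃ n) :
    Function.Surjective (M.submatrix e₁ e₂).vecMul ↔ Function.Surjective M.vecMul := by
  have hM : (M.submatrix e₁ e₂).vecMul =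
      e₂.symm.arrowCongr (Equiv.refl S) ∘ M.vecMul ∘ e₁.arrowCongr (Equiv.refl S) :=
    funext fun v => Matrix.submatrix_vecMul_equiv M v e₁ e₂
  rw [hM, Equiv.comp_surjective, Equiv.surjective_comp]

end Matrices

section Layout

variable {F : Type*} [Field F] {s N : ℕ}

theorem digit_finFunctionFinEquiv (j : Fin N → Fin s) (u : Fin N) :
    digit s (finFunctionFinEquiv j : Fin (s ^ N)) u = j u := by
  conv_rhs => rw [← finFunctionFinEquiv.symm_apply_apply j]
  rfl

theorem digit_eq_zero {i u : ℕ} (hi : i < s ^ N) (hu : N ≤ u) : digit s i u = 0 := by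
  rcases s.eq_zero_or_pos with rfl | hs
  · have hi0 : i = 0 := by
      have := hi.trans_le (zero_pow_le_one N)
      omega
    simp [digit, hi0]
  · rw [digit, Nat.div_eq_of_lt (hi.trans_le (Nat.pow_le_pow_right hs hu)), Nat.zero_mod]

theorem forall_digit_eq_iff {i j : Fin N → Fin s} {x : Fin N} :
    (∀ u, u ≠ (x : ℕ) → digit s (finFunctionFinEquiv i : Fin (s ^ N)) u =
      digit s (finFunctionFinEquiv j : Fin (s ^ N)) u) ↔ ∀ u, u ≠ x → i u = j u := by
  constructor
  · intro h u hu
    have hu' := h u (Fin.val_ne_of_ne hu)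
    rw [digit_finFunctionFinEquiv, digit_finFunctionFinEquiv] at hu'
    exact Fin.ext hu'
  · intro h u hu
    rcases lt_or_ge u N with huN | huN
    · rw [digit_finFunctionFinEquiv i ⟨u, huN⟩, digit_finFunctionFinEquiv j ⟨u, huN⟩,
        h ⟨u, huN⟩ (Fin.ne_of_val_ne hu)]
    · rw [digit_eq_zero (Fin.is_lt _) huN, digit_eq_zero (Fin.is_lt _) huN]

/-- The block column `A_{x,b}` of the paper, with group size `g`. For `b ≥ s` its kernel has no
entries off the diagonal. -/
def codeBlock (lam : ℕ → F) (s g : ℕ) {N : ℕ} (x : Fin N) (b : ℕ) :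
    BlockColumn F (Fin N) (Fin s) where
  digit := x
  weight := Matrix.of fun z y => if z = y then 1 else if (z : ℕ) = b then -1 else 0
  node y := lam (x * s * g + b * s + y)

theorem codeBlock_toMatrix_apply (lam : ℕ → F) (g : ℕ) (x : Fin N) (b : ℕ) {t : ℕ}
    (i j : Fin N → Fin s) (z : Fin t) :
    (codeBlock lam s g x b).toMatrix t (i, z) j =
      Aent lam s g x b (finFunctionFinEquiv i : Fin (s ^ N))
        (finFunctionFinEquiv j : Fin (s ^ N)) z := by
  have hij : i = j ↔ i x = j x ∧ ∀ u, u ≠ x → i u = j u :=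
    ⟨fun h => h ▸ ⟨rfl, fun _ _ => rfl⟩, fun h => funext fun u =>
      if hu : u = x then hu ▸ h.1 else h.2 u hu⟩
  simp only [Aent, digit_finFunctionFinEquiv, forall_digit_eq_iff, Fin.val_inj,
    EmbeddingLike.apply_eq_iff_eq, hij, BlockColumn.toMatrix, codeBlock, Matrix.of_apply]
  have hne : i x ≠ j x → (i x : ℕ) = b → (j x : ℕ) ≠ b := fun h hi hj =>
    h (Fin.ext (hi.trans hj.symm))
  split_ifs <;> simp_all

theorem enum_mem {B : Finset ℕ} {m : ℕ} (hm : m < B.card) : enum B m ∈ B := by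
  have hm' : m < (B.sort (· ≤ ·)).length := by rwa [Finset.length_sort]
  rw [enum, List.getD_eq_getElem _ _ hm', ← Finset.mem_sort (· ≤ ·)]
  exact List.getElem_mem hm'

theorem loc_sum_add {c : ℕ} {sz : ℕ → ℕ} {m o : ℕ} (hm : m < c) (ho : o < sz m) :
    loc c sz (∑ i ∈ Finset.range m, sz i + o) = (m, o) := by
  induction c generalizing sz m with
  | zero => omega
  | succ c ih =>
    cases m with
    | zero => simp [loc, ho]
    | succ m =>
      have hsub : ∑ i ∈ Finset.range (m + 1), sz i + o - sz 0 =
          ∑ i ∈ Finset.range m, sz (i + 1) + o := by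
        rw [Finset.sum_range_succ']
        omega
      have hge : ¬ ∑ i ∈ Finset.range (m + 1), sz i + o < sz 0 := by
        rw [Finset.sum_range_succ']
        omega
      rw [loc, if_neg hge, hsub, ih (sz := fun i => sz (i + 1)) (by omega) ho]

variable {c t : ℕ} {a : ℕ → ℕ} {B : ℕ → Finset ℕ}

/-- The block columns of `MultiCat`; the `u`-th column of the `m`-th group is `A_{a_m,b}` with `b`
the `u`-th element of `B_m`. -/
def multiCatBlock (lam : ℕ → F) (s g : ℕ) (ha : ∀ m < c, a m < N) (B : ℕ → Finset ℕ)
    (p : Σ m : Fin c, Fin (B m).card) : BlockColumn F (Fin N) (Fin s) :=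
  codeBlock lam s g ⟨a p.1, ha p.1 p.1.2⟩ (enum (B p.1) p.2)

/-- The encoding of the rows of `MultiCat`. -/
def rowEquiv (s N t : ℕ) : (Fin N → Fin s) × Fin t ≃ Fin (s ^ N * t) :=
  (finFunctionFinEquiv.prodCongr (Equiv.refl _)).trans finProdFinEquiv

/-- The encoding of the columns of `MultiCat`. -/
def colEquiv (s N : ℕ) (hsum : ∑ m ∈ Finset.range c, (B m).card = t) :
    (Σ m : Fin c, Fin (B m).card) × (Fin N → Fin s) ≃ Fin (s ^ N * t) :=
  (Equiv.sigmaProdDistrib _ _).trans <|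
    (Equiv.sigmaCongrRight fun m : Fin c =>
      ((Equiv.refl (Fin (B m).card)).prodCongr finFunctionFinEquiv).trans <|
        finProdFinEquiv.trans (finCongr (mul_comm _ (s ^ N)))).trans <|
    (finSigmaFinEquiv (n := fun m : Fin c => s ^ N * (B m).card)).trans <| finCongr <| by
      rw [← hsum, Finset.mul_sum, Finset.sum_range]

theorem loc_colEquiv (s N : ℕ) (hsum : ∑ m ∈ Finset.range c, (B m).card = t)
    (p : Σ m : Fin c, Fin (B m).card) (j : Fin N → Fin s) :
    loc c (fun m => s ^ N * (B m).card) (colEquiv s N hsum (p, j)) =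
      ((p.1 : ℕ), (finFunctionFinEquiv j : ℕ) + s ^ N * p.2) := by
  obtain ⟨m, u⟩ := p
  have ho : (finFunctionFinEquiv j : ℕ) + s ^ N * u < s ^ N * (B m).card := by
    rw [mul_comm _ (B m).card]
    exact (finProdFinEquiv (u, finFunctionFinEquiv j)).2
  rw [← loc_sum_add (sz := fun m => s ^ N * (B m).card) m.2 ho, Finset.sum_range]
  exact congrArg _ (finSigmaFinEquiv_apply _)

theorem multiCat_submatrix (lam : ℕ → F) (g : ℕ) (ha : ∀ m < c, a m < N)
    (hsum : ∑ m ∈ Finset.range c, (B m).card = t) :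
    (MultiCat lam s g (s ^ N) t c a B).submatrix (rowEquiv s N t) (colEquiv s N hsum) =
      concatMatrix (multiCatBlock lam s g ha B) t := by
  ext ⟨i, z⟩ ⟨p, j⟩
  have hj := (finFunctionFinEquiv j).2
  have hrow : (rowEquiv s N t (i, z) : ℕ) = z + t * finFunctionFinEquiv i := rfl
  simp only [Matrix.submatrix_apply, MultiCat, Matrix.of_apply, loc_colEquiv, hrow,
    Nat.add_mul_mod_self_left, Nat.mod_eq_of_lt z.2, Nat.mod_eq_of_lt hj,
    Nat.add_mul_div_left _ _ (Nat.zero_lt_of_lt z.2), Nat.div_eq_of_lt z.2,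
    Nat.add_mul_div_left _ _ (Nat.zero_lt_of_lt hj), Nat.div_eq_of_lt hj, zero_add]
  exact (codeBlock_toMatrix_apply lam g ⟨a p.1, ha p.1 p.1.2⟩ (enum (B p.1) p.2) i j z).symm

theorem det_multiCat_ne_zero_iff (lam : ℕ → F) (g : ℕ) (ha : ∀ m < c, a m < N)
    (hsum : ∑ m ∈ Finset.range c, (B m).card = t) :
    (MultiCat lam s g (s ^ N) t c a B).det ≠ 0 ↔
      InterpolatesBelow (multiCatBlock lam s g ha B) t := by
  rw [interpolatesBelow_iff_surjective_vecMul, ← multiCat_submatrix lam g ha hsum,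
    surjective_vecMul_submatrix_equiv, Matrix.vecMul_surjective_iff_isUnit,
    Matrix.isUnit_iff_isUnit_det, isUnit_iff_ne_zero]

theorem amatB_eq_multiCat (lam : ℕ → F) (s g ℓ x : ℕ) (b : Finset ℕ) :
    AmatB lam s g ℓ x b.card b = MultiCat lam s g ℓ b.card 1 (fun _ => x) fun _ => b := by
  ext ρ k
  simp [AmatB, MultiCat, loc]

end Layout

section LocalConstraints

variable {F : Type*} [Field F] {s g N c : ℕ} {lam : ℕ → F} {a : ℕ → ℕ} {B : ℕ → Finset ℕ}

theorem LocalConstraints.interpolatesBelow (hloc : LocalConstraints lam s g (s ^ N) N)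
    (x : Fin N) {b : Finset ℕ} (hb : b ⊆ Finset.range g) (hb' : b.Nonempty) :
    InterpolatesBelow (fun u : Fin b.card => codeBlock lam s g x (enum b u)) b.card := by
  intro w
  have hdet := hloc x x.2 b hb hb'
  rw [amatB_eq_multiCat, det_multiCat_ne_zero_iff lam g (fun _ _ => x.2) (by simp)] at hdet
  obtain ⟨f, hf, hAf⟩ := hdet fun p => w p.2
  exact ⟨f, hf, fun u => hAf ⟨0, u⟩⟩

theorem LocalConstraints.interpolatesBelow_fiber (hloc : LocalConstraints lam s g (s ^ N) N)
    (ha : ∀ m < c, a m < N) (hainj : ∀ m₁ < c, ∀ m₂ < c, a m₁ = a m₂ → m₁ = m₂)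
    (hBsub : ∀ m < c, B m ⊆ Finset.range g) (x : Fin N) :
    InterpolatesBelow
      (fun p : {p // (multiCatBlock lam s g ha B p).digit = x} => multiCatBlock lam s g ha B p)
      (∑ m ∈ {m : Fin c | (⟨a m, ha m m.2⟩ : Fin N) = x}, (B m).card) := by
  rcases isEmpty_or_nonempty {p // (multiCatBlock lam s g ha B p).digit = x} with _ | ⟨⟨m, u⟩, hm⟩
  · exact .of_isEmpty _ _
  have hfiber (m' : Fin c) : (⟨a m', ha m' m'.2⟩ : Fin N) = x ↔ m' = m := by
    rw [← hm]
    exact ⟨fun h => Fin.ext (hainj _ m'.2 _ m.2 (congrArg Fin.val h)), fun h => h ▸ rfl⟩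
  simp only [hfiber, Finset.filter_eq', Finset.mem_univ, if_true, Finset.sum_singleton]
  intro w
  obtain ⟨f, hf, hAf⟩ := hloc.interpolatesBelow ⟨a m, ha m m.2⟩ (hBsub m m.2)
    (Finset.card_pos.1 u.pos) fun u' => w ⟨⟨m, u'⟩, hm⟩
  refine ⟨f, hf, ?_⟩
  rintro ⟨⟨m', u'⟩, hm'⟩
  obtain rfl := (hfiber m').1 hm'
  exact hAf u'

theorem nodeIndex_lt_and_div_eq {x b y : ℕ} (hx : x < N) (hb : b < g) (hy : y < s) :
    x * s * g + b * s + y < N * (s * g) ∧ (x * s * g + b * s + y) / (s * g) = x := by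
  have hoffset : b * s + y < s * g := by nlinarith
  have hindex : x * s * g + b * s + y = s * g * x + (b * s + y) := by ring
  have hx' : s * g * (x + 1) ≤ s * g * N := Nat.mul_le_mul_left _ hx
  rw [hindex, Nat.mul_add_div (Nat.zero_lt_of_lt hoffset), Nat.div_eq_of_lt hoffset]
  exact ⟨by linarith, rfl⟩

theorem digit_eq_of_multiCatBlock_node_eq (ha : ∀ m < c, a m < N)
    (hdisj : ∀ i < N * (s * g), ∀ j < N * (s * g), lam i = lam j → i / (s * g) = j / (s * g))
    (hBsub : ∀ m < c, B m ⊆ Finset.range g) (p p' : Σ m : Fin c, Fin (B m).card) (y y' : Fin s)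
    (h : (multiCatBlock lam s g ha B p).node y = (multiCatBlock lam s g ha B p').node y') :
    (multiCatBlock lam s g ha B p).digit = (multiCatBlock lam s g ha B p').digit := by
  have hnode (p : Σ m : Fin c, Fin (B m).card) (y : Fin s) :=
    nodeIndex_lt_and_div_eq (ha p.1 p.1.2)
      (Finset.mem_range.1 (hBsub p.1 p.1.2 (enum_mem p.2.2))) y.2
  have hquot := hdisj _ (hnode p y).1 _ (hnode p' y').1 h
  rw [(hnode p y).2, (hnode p' y').2] at hquot
  exact Fin.ext hquot

theorem statement4_general (hloc : LocalConstraints lam s g (s ^ N) N)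
    (hdisj : ∀ i < N * (s * g), ∀ j < N * (s * g), lam i = lam j → i / (s * g) = j / (s * g))
    (ha : ∀ m < c, a m < N) (hainj : ∀ m₁ < c, ∀ m₂ < c, a m₁ = a m₂ → m₁ = m₂)
    (hBsub : ∀ m < c, B m ⊆ Finset.range g) {t : ℕ}
    (hsum : ∑ m ∈ Finset.range c, (B m).card = t) :
    (MultiCat lam s g (s ^ N) t c a B).det ≠ 0 := by
  rw [det_multiCat_ne_zero_iff lam g ha hsum, ← hsum, Finset.sum_range,
    ← Finset.sum_fiberwise Finset.univ (fun m : Fin c => (⟨a m, ha m m.2⟩ : Fin N))]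
  exact .of_fibers (digit_eq_of_multiCatBlock_node_eq ha hdisj hBsub)
    (hloc.interpolatesBelow_fiber ha hainj hBsub)

end LocalConstraints

/-- Lemma 4 of the paper, second construction, group size `s+1`: if the
`λ_i` are pairwise distinct and satisfy the local constraints, then for any `c ≥ 1` pairwise
distinct group indices `a_0, …, a_{c−1} ∈ [n/(s+1)]` and nonempty subsets
`B_0, …, B_{c−1} ⊆ [s+1]` with `|B_0| + ⋯ + |B_{c−1}| = t ≤ r = n − k`, the matrix
`[A_{a₀,B₀}^{(t)} | ⋯ | A_{a_{c−1},B_{c−1}}^{(t)}]` has nonzero determinant. -/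
theorem statement4 (F : Type*) [Field F] [Fintype F] (n k d s ℓ : ℕ)
    (hk : 1 ≤ k) (hkn : k < n) (hd₁ : k + 1 ≤ d) (hd₂ : d ≤ n - 1)
    (hs : s = d - k + 1) (hdiv : (s + 1) ∣ n) (hℓ : ℓ = s ^ (n / (s + 1)))
    (lam : ℕ → F)
    (hdist : ∀ i < n * s, ∀ j < n * s, lam i = lam j → i = j)
    (hloc : LocalConstraints lam s (s + 1) ℓ (n / (s + 1)))
    (c t : ℕ) (hc : 1 ≤ c)
    (a : ℕ → ℕ) (ha : ∀ m < c, a m < n / (s + 1))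
    (hainj : ∀ m₁ < c, ∀ m₂ < c, a m₁ = a m₂ → m₁ = m₂)
    (B : ℕ → Finset ℕ) (hBsub : ∀ m < c, B m ⊆ Finset.range (s + 1))
    (hBne : ∀ m < c, (B m).Nonempty)
    (hsum : ∑ m ∈ Finset.range c, (B m).card = t)
    (htr : t ≤ n - k) :
    (MultiCat lam s (s + 1) ℓ t c a B).det ≠ 0 := by
  subst hℓ
  have hn : n / (s + 1) * (s * (s + 1)) = n * s := by
    rw [mul_left_comm, Nat.div_mul_cancel hdiv, mul_comm]
  exact statement4_general hloc (fun i hi j hj hij =>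
    congrArg (· / (s * (s + 1))) (hdist i (hn ▸ hi) j (hn ▸ hj) hij)) ha hainj hBsub hsum
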